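/- Let q be a homogeneous polynomial of degree n in n real variables with nonnegative coefficients, normalized so that q(1,...,1) = 1. Then q is doubly stochastic (i.e., (∂q/∂xᵢ)(1,...,1) = 1 for all i) if and only if q(x₁,...,xₙ) ≥ ∏ᵢ xᵢ for all vectors (x₁,...,xₙ) with positive real coordinates. -/

import Mathlib

open MvPolynomial

/-!
The inequality is weighted AM-GM: the coefficients of `q` are weights summing to `q(1) = 1`, and the
geometric mean of the monomials of `q` with these weights is `∏ i, x i ^ (∂q/∂xᵢ)(1)`. Conversely,
if `q` dominates `∏ i, x i ^ w i` on the positive orthant, then the difference vanishes at `1` and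
so has a minimum there, where its partial derivatives `(∂q/∂xᵢ)(1) - w i` must be zero.
-/

section CommSemiring

variable {σ R : Type*} [CommSemiring R]

lemma eval_one_eq_sum_coeff (q : MvPolynomial σ R) :
    eval (fun _ => 1) q = ∑ m ∈ q.support, q.coeff m := by
  simp [eval_eq]

lemma eval_one_pderiv_eq_sum_coeff_mul (q : MvPolynomial σ R) (i : σ) :
    eval (fun _ => 1) (pderiv i q) = ∑ m ∈ q.support, q.coeff m * m i := by
  conv_lhs => rw [q.as_sum, map_sum, map_sum]
  simp [pderiv_monomial, eval_monomial]

end CommSemiring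

lemma hasDerivAt_eval_update {σ 𝕜 : Type*} [DecidableEq σ] [NontriviallyNormedField 𝕜]
    (q : MvPolynomial σ 𝕜) (x : σ → 𝕜) (i : σ) (t : 𝕜) :
    HasDerivAt (fun s => eval (Function.update x i s) q)
      (eval (Function.update x i t) (pderiv i q)) t := by
  induction q using MvPolynomial.induction_on with
  | C a => simpa using hasDerivAt_const t a
  | add p q hp hq => simpa using hp.fun_add hq
  | mul_X p j hp =>
    rcases eq_or_ne j i with rfl | hj
    · simpa [Derivation.leibniz, mul_comm, add_comm] using hp.fun_mul (hasDerivAt_id t)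
    · simpa [Derivation.leibniz, pderiv_X_of_ne hj, hj, mul_comm] using hp.mul_const (x j)

section Real

variable {σ : Type*} [Fintype σ]

lemma prod_pow_rpow_eq_prod_rpow_mul {x : σ → ℝ} (hx : ∀ i, 0 ≤ x i) (m : σ → ℕ) (c : ℝ) :
    (∏ i, x i ^ m i) ^ c = ∏ i, x i ^ (c * m i) := by
  rw [← Real.finsetProd_rpow _ _ fun i _ => pow_nonneg (hx i) _]
  refine Finset.prod_congr rfl fun i _ => ?_
  rw [mul_comm, Real.rpow_mul (hx i), Real.rpow_natCast]

lemma prod_rpow_eval_one_pderiv_le_eval {q : MvPolynomial σ ℝ}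
    (hcoeff : ∀ m, 0 ≤ q.coeff m) (hone : eval (fun _ => 1) q = 1)
    {x : σ → ℝ} (hx : ∀ i, 0 ≤ x i) :
    ∏ i, x i ^ eval (fun _ => 1) (pderiv i q) ≤ eval x q := by
  have hsum : ∑ m ∈ q.support, q.coeff m = 1 := (eval_one_eq_sum_coeff q).symm.trans hone
  calc ∏ i, x i ^ eval (fun _ => 1) (pderiv i q)
      = ∏ i, ∏ m ∈ q.support, x i ^ (q.coeff m * m i) := by
        refine Finset.prod_congr rfl fun i _ => ?_
        rw [eval_one_pderiv_eq_sum_coeff_mul, Real.rpow_sum_of_nonneg (hx i)]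
        exact fun m _ => mul_nonneg (hcoeff m) (Nat.cast_nonneg _)
    _ = ∏ m ∈ q.support, (∏ i, x i ^ m i) ^ q.coeff m := by
        simp only [prod_pow_rpow_eq_prod_rpow_mul hx]
        exact Finset.prod_comm
    _ ≤ ∑ m ∈ q.support, q.coeff m * ∏ i, x i ^ m i :=
        Real.geom_mean_le_arith_mean_weighted _ _ _ (fun m _ => hcoeff m) hsum
          fun m _ => Finset.prod_nonneg fun i _ => pow_nonneg (hx i) _
    _ = eval x q := (eval_eq' x q).symm

lemma prod_update_one_rpow [DecidableEq σ] (w : σ → ℝ) (i : σ) (t : ℝ) :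
    ∏ j, Function.update (fun _ => 1) i t j ^ w j = t ^ w i := by
  rw [Fintype.prod_eq_single i fun j hj => by simp [hj], Function.update_self]

lemma eval_one_pderiv_eq_of_prod_rpow_le_eval {q : MvPolynomial σ ℝ}
    (hone : eval (fun _ => 1) q = 1) {w : σ → ℝ}
    (hle : ∀ x : σ → ℝ, (∀ i, 0 < x i) → ∏ i, x i ^ w i ≤ eval x q) (i : σ) :
    eval (fun _ => 1) (pderiv i q) = w i := by
  classical
  let f : ℝ → ℝ := fun t => eval (Function.update (fun _ => 1) i t) q - t ^ w i
  have hderiv : HasDerivAt f (eval (fun _ => 1) (pderiv i q) - w i) 1 := by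
    simpa using (hasDerivAt_eval_update q (fun _ => 1) i 1).fun_sub
      (Real.hasDerivAt_rpow_const (p := w i) (Or.inl one_ne_zero))
  have hf_one : f 1 = 0 := by simp [f, hone]
  have hf_nonneg : ∀ t, 0 < t → 0 ≤ f t := by
    intro t ht
    have hpos : ∀ j, 0 < Function.update (fun _ => (1 : ℝ)) i t j :=
      (Function.forall_update_iff _ fun _ s => 0 < s).2 ⟨ht, fun _ _ => one_pos⟩
    simpa only [f, sub_nonneg, prod_update_one_rpow] using hle _ hpos
  have hmin : IsLocalMin f 1 := by
    filter_upwards [lt_mem_nhds one_pos] with t ht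
    exact hf_one.trans_le (hf_nonneg t ht)
  exact sub_eq_zero.1 (hmin.hasDerivAt_eq_zero hderiv)

theorem stmt4_general {q : MvPolynomial σ ℝ} (hcoeff : ∀ m, 0 ≤ q.coeff m)
    (hone : eval (fun _ => 1) q = 1) (w : σ → ℝ) :
    (∀ i, eval (fun _ => 1) (pderiv i q) = w i) ↔
      ∀ x : σ → ℝ, (∀ i, 0 < x i) → ∏ i, x i ^ w i ≤ eval x q := by
  refine ⟨fun hgrad x hx => ?_, eval_one_pderiv_eq_of_prod_rpow_le_eval hone⟩
  simpa only [hgrad] using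
    prod_rpow_eval_one_pderiv_le_eval hcoeff hone fun i => (hx i).le

end Real

theorem stmt4 (n : ℕ) (hn : 0 < n) (q : MvPolynomial (Fin n) ℝ)
    (hq : q.IsHomogeneous n) (hcoeff : ∀ m, 0 ≤ q.coeff m)
    (hone : eval (fun _ => (1 : ℝ)) q = 1) :
    (∀ i, eval (fun _ => (1 : ℝ)) (pderiv i q) = 1) ↔
      ∀ x : Fin n → ℝ, (∀ i, 0 < x i) → (∏ i, x i) ≤ eval x q := by
  simpa only [Real.rpow_one] using stmt4_general hcoeff hone fun _ => 1
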